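/- Let a, b ≥ 1 and let μ₋, μ₊ = ((√b ∓ √(a(a+b-1)))/(a+b))². Then ∫_{μ₋}^{μ₊} (a+b)√((μ₊-x)(x-μ₋))/(2πx(1-x)) dx = 1, i.e., the Wachter law is a probability measure. -/

import Mathlib

open Real

/-- `arcsin` of an affine map sending `[m, p]` onto `[-1, 1]`. -/
lemma hasDerivAt_arcsin_affine {m p x : ℝ} (hm : m < x) (hp : x < p) :
    HasDerivAt (fun x => arcsin ((2 * x - m - p) / (p - m)))
      (1 / √((p - x) * (x - m))) x := by
  have hd : 0 < p - m := by linarith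
  have hpos : 0 < (p - x) * (x - m) := mul_pos (by linarith) (by linarith)
  have hy : 1 - ((2 * x - m - p) / (p - m)) ^ 2 = (2 / (p - m)) ^ 2 * ((p - x) * (x - m)) := by
    field_simp
    ring
  have h1 : -1 < (2 * x - m - p) / (p - m) := by rw [lt_div_iff₀ hd]; linarith
  have h2 : (2 * x - m - p) / (p - m) < 1 := by rw [div_lt_iff₀ hd]; linarith
  have hin : HasDerivAt (fun x => (2 * x - m - p) / (p - m)) (2 / (p - m)) x := by
    simpa using ((((hasDerivAt_id x).const_mul 2).sub_const m).sub_const p).div_const (p - m)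
  have h := (hasDerivAt_arcsin h1.ne' h2.ne).comp x hin
  refine h.congr_deriv ?_
  rw [hy, sqrt_mul (sq_nonneg _), sqrt_sq (by positivity)]
  have := (sqrt_pos.2 hpos).ne'
  field_simp

/-- `arcsin` of the map, affine in `1 / x`, sending `[m, p]` onto `[-1, 1]`; the factor `√(m * p)`
makes the formula valid for `m = 0` too. -/
lemma hasDerivAt_sqrt_mul_arcsin_inv {m p x : ℝ} (h0 : 0 ≤ m) (hm : m < x) (hp : x < p) :
    HasDerivAt (fun x => √(m * p) * arcsin ((m + p - 2 * (m * p) / x) / (p - m)))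
      (m * p / (x * √((p - x) * (x - m)))) x := by
  rcases h0.eq_or_lt with rfl | h0
  · simpa using hasDerivAt_const x (0 : ℝ)
  have hx : 0 < x := h0.trans hm
  have hp0 : 0 < p := hx.trans hp
  have hd : 0 < p - m := by linarith
  have hmp : 0 < m * p := mul_pos h0 hp0
  have hpos : 0 < (p - x) * (x - m) := mul_pos (by linarith) (by linarith)
  have hy : 1 - ((m + p - 2 * (m * p) / x) / (p - m)) ^ 2
      = (2 / (x * (p - m))) ^ 2 * (m * p * ((p - x) * (x - m))) := by
    field_simp
    ring
  have hlt : ((m + p - 2 * (m * p) / x) / (p - m)) ^ 2 < 1 := by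
    have : 0 < (2 / (x * (p - m))) ^ 2 * (m * p * ((p - x) * (x - m))) := by positivity
    linarith
  obtain ⟨h1, h2⟩ := abs_lt.1 ((sq_lt_one_iff_abs_lt_one _).1 hlt)
  have hin : HasDerivAt (fun x => (m + p - 2 * (m * p) / x) / (p - m))
      (2 * (m * p) / x ^ 2 / (p - m)) x := by
    have h := (((hasDerivAt_inv hx.ne').const_mul (2 * (m * p))).const_sub (m + p)).div_const
      (p - m)
    refine h.congr_deriv ?_
    ring
  refine (((hasDerivAt_arcsin h1.ne' h2.ne).comp x hin).const_mul √(m * p)).congr_deriv ?_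
  rw [hy, sqrt_mul (sq_nonneg _), sqrt_sq (by positivity), sqrt_mul hmp.le]
  have := (sqrt_pos.2 hpos).ne'
  have := (sqrt_pos.2 hmp).ne'
  field_simp

lemma hasDerivAt_sqrt_mul_sub {m p x : ℝ} (hm : m < x) (hp : x < p) :
    HasDerivAt (fun x => √((p - x) * (x - m)))
      ((m + p - 2 * x) / (2 * √((p - x) * (x - m)))) x := by
  have hpos : 0 < (p - x) * (x - m) := mul_pos (by linarith) (by linarith)
  have h := ((hasDerivAt_id x).const_sub p).mul ((hasDerivAt_id x).sub_const m)
  refine (h.sqrt hpos.ne').congr_deriv ?_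
  simp only [id, Pi.mul_apply]
  congr 1
  ring

/-- The integral underlying the normalisation of the Marchenko–Pastur law. -/
lemma integral_sqrt_mul_sub_div {m p : ℝ} (h0 : 0 ≤ m) (hmp : m < p) :
    IntervalIntegrable (fun x => √((p - x) * (x - m)) / x) MeasureTheory.volume m p ∧
      ∫ x in m..p, √((p - x) * (x - m)) / x = π * ((m + p) / 2 - √(m * p)) := by
  have hd : p - m ≠ 0 := by linarith
  set F : ℝ → ℝ := fun x => √((p - x) * (x - m))
    + (m + p) / 2 * arcsin ((2 * x - m - p) / (p - m))
    - √(m * p) * arcsin ((m + p - 2 * (m * p) / x) / (p - m)) with hF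
  have hcont : ContinuousOn F (Set.Icc m p) := by
    refine ContinuousOn.sub (by fun_prop) ?_
    rcases h0.eq_or_lt with rfl | h0
    · simpa using continuousOn_const
    refine continuousOn_const.mul (continuous_arcsin.comp_continuousOn ?_)
    refine (continuousOn_const.sub (continuousOn_const.div continuousOn_id ?_)).div_const _
    exact fun x hx => (h0.trans_le hx.1).ne'
  have hderiv : ∀ x ∈ Set.Ioo m p, HasDerivAt F (√((p - x) * (x - m)) / x) x := by
    rintro x ⟨hm, hp⟩
    have hx : 0 < x := h0.trans_lt hm
    have hpos : 0 < (p - x) * (x - m) := mul_pos (by linarith) (by linarith)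
    refine (((hasDerivAt_sqrt_mul_sub hm hp).add
      ((hasDerivAt_arcsin_affine hm hp).const_mul ((m + p) / 2))).sub
      (hasDerivAt_sqrt_mul_arcsin_inv h0 hm hp)).congr_deriv ?_
    have hs := (sqrt_pos.2 hpos).ne'
    have hsq := sq_sqrt hpos.le
    field_simp
    rw [hsq]
    ring
  have hint : IntervalIntegrable (fun x => √((p - x) * (x - m)) / x) MeasureTheory.volume m p := by
    rw [intervalIntegrable_iff_integrableOn_Ioc_of_le hmp.le]
    exact intervalIntegral.integrableOn_deriv_of_nonneg hcont hderiv
      fun x hx => div_nonneg (sqrt_nonneg _) (h0.trans hx.1.le)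
  refine ⟨hint, ?_⟩
  rw [intervalIntegral.integral_eq_sub_of_hasDerivAt_of_le hmp.le hcont hderiv hint]
  have e1 : (2 * p - m - p) / (p - m) = 1 := by field_simp; ring
  have e2 : (2 * m - m - p) / (p - m) = -1 := by field_simp; ring
  simp only [hF, e1, e2]
  rcases h0.eq_or_lt with rfl | h0
  · simp
    ring
  have hp0 : 0 < p := h0.trans hmp
  have e3 : (m + p - 2 * (m * p) / p) / (p - m) = 1 := by field_simp; ring
  have e4 : (m + p - 2 * (m * p) / m) / (p - m) = -1 := by field_simp; ring
  simp only [e3, e4, arcsin_one, arcsin_neg_one, sub_self, zero_mul, mul_zero, sqrt_zero]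
  ring

lemma integral_sqrt_mul_sub_div_one_sub {m p : ℝ} (h1 : p ≤ 1) (hmp : m < p) :
    IntervalIntegrable (fun x => √((p - x) * (x - m)) / (1 - x)) MeasureTheory.volume m p ∧
      ∫ x in m..p, √((p - x) * (x - m)) / (1 - x)
        = π * (1 - (m + p) / 2 - √((1 - m) * (1 - p))) := by
  obtain ⟨hint, hval⟩ := integral_sqrt_mul_sub_div (m := 1 - p) (p := 1 - m)
    (by linarith) (by linarith)
  have hfun : (fun x => √((p - x) * (x - m)) / (1 - x))
      = fun x => (fun y => √((1 - m - y) * (y - (1 - p))) / y) (1 - x) := by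
    funext x
    dsimp only
    congr 2
    ring
  refine ⟨?_, ?_⟩
  · rw [hfun]
    simpa using (hint.comp_sub_left 1).symm
  · rw [hfun, intervalIntegral.integral_comp_sub_left
      (fun y => √((1 - m - y) * (y - (1 - p))) / y) 1, hval, mul_comm (1 - p)]
    ring

lemma integral_sqrt_mul_sub_div_mul_one_sub {m p : ℝ} (h0 : 0 ≤ m) (h1 : p ≤ 1) (hmp : m < p) :
    ∫ x in m..p, √((p - x) * (x - m)) / (x * (1 - x))
      = π * (1 - √(m * p) - √((1 - m) * (1 - p))) := by
  obtain ⟨hint, hval⟩ := integral_sqrt_mul_sub_div h0 hmp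
  obtain ⟨hint', hval'⟩ := integral_sqrt_mul_sub_div_one_sub h1 hmp
  have hsplit : ∫ x in m..p, √((p - x) * (x - m)) / (x * (1 - x))
      = ∫ x in m..p, (√((p - x) * (x - m)) / x + √((p - x) * (x - m)) / (1 - x)) := by
    refine intervalIntegral.integral_congr fun x hx => ?_
    rw [Set.uIcc_of_le hmp.le] at hx
    obtain ⟨hm, hp⟩ := hx
    rcases hm.eq_or_lt with rfl | hm
    · simp
    rcases hp.eq_or_lt with rfl | hp
    · simp
    have hx : x ≠ 0 := by linarith
    have hx' : 1 - x ≠ 0 := by linarith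
    field_simp
    ring
  rw [hsplit, intervalIntegral.integral_add hint hint', hval, hval']
  ring

/-- The Wachter law is a probability measure. -/
theorem wachter_is_probability (a b : ℝ) (ha : 1 ≤ a) (hb : 1 ≤ b) (μm μp : ℝ)
    (hμm : μm = ((Real.sqrt b - Real.sqrt (a * (a + b - 1))) / (a + b)) ^ 2)
    (hμp : μp = ((Real.sqrt b + Real.sqrt (a * (a + b - 1))) / (a + b)) ^ 2) :
    ∫ x in μm..μp, (a + b) * Real.sqrt ((μp - x) * (x - μm)) / (2 * π * x * (1 - x))
      = 1 := by
  have hab : 0 < a + b := by linarith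
  have hc : 0 < a * (a + b - 1) := mul_pos (by linarith) (by linarith)
  have hs : √b ^ 2 = b := sq_sqrt (by linarith)
  have ht : √(a * (a + b - 1)) ^ 2 = a * (a + b - 1) := sq_sqrt hc.le
  have hs0 : 0 < √b := sqrt_pos.2 (by linarith)
  have ht0 : 0 < √(a * (a + b - 1)) := sqrt_pos.2 hc
  set s := √b
  set t := √(a * (a + b - 1))
  have hsum : μm + μp = 2 * (b + a * (a + b - 1)) / (a + b) ^ 2 := by
    rw [hμm, hμp, ← ht]
    nth_rewrite 3 [← hs]
    field_simp
    ring
  have hprod : μm * μp = ((a - 1) / (a + b)) ^ 2 := by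
    have : μm * μp = ((s ^ 2 - t ^ 2) / (a + b) ^ 2) ^ 2 := by
      rw [hμm, hμp]
      field_simp
      ring
    rw [this, hs, ht]
    field_simp
    ring
  have hprod' : (1 - μm) * (1 - μp) = ((b - 1) / (a + b)) ^ 2 := by
    have : (1 - μm) * (1 - μp) = 1 - (μm + μp) + μm * μp := by ring
    rw [this, hsum, hprod]
    field_simp
    ring
  have h0 : 0 ≤ μm := by rw [hμm]; positivity
  have hlt : μm < μp := by
    have : μp - μm = 4 * (s * t) / (a + b) ^ 2 := by
      rw [hμm, hμp]
      field_simp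
      ring
    have : 0 < 4 * (s * t) / (a + b) ^ 2 := by positivity
    linarith
  have hsum_le : μm + μp ≤ 2 := by
    rw [hsum, div_le_iff₀ (by positivity)]
    nlinarith
  have h1 : μp ≤ 1 := by
    by_contra! h
    have : 0 ≤ (1 - μm) * (1 - μp) := by rw [hprod']; positivity
    nlinarith
  have hfun : ∀ x, (a + b) * √((μp - x) * (x - μm)) / (2 * π * x * (1 - x))
      = (a + b) / (2 * π) * (√((μp - x) * (x - μm)) / (x * (1 - x))) := fun x => by
    rw [div_mul_div_comm, mul_assoc (2 * π)]
  simp only [hfun]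
  rw [intervalIntegral.integral_const_mul, integral_sqrt_mul_sub_div_mul_one_sub h0 h1 hlt, hprod,
    hprod', sqrt_sq (div_nonneg (by linarith) hab.le), sqrt_sq (div_nonneg (by linarith) hab.le)]
  have := pi_pos.ne'
  field_simp
  ring
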